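/- For every length and every number of toes t ≥ 1, the t-toed caterpillar is odd prime. That is, for every n ≥ 1 and t ≥ 1, the tree with spine u, v_1, ..., v_n, w in which each interior spine vertex v_i additionally has exactly t pendant leaves x_{i,1}, ..., x_{i,t} (so every interior vertex has degree t+2) admits an odd prime labeling. -/

import Mathlib

/-- A simple graph `G` of order `n` is *odd prime* if there is an injective labeling
of its vertices by odd integers from `{1, 3, ..., 2n-1}` such that the labels of
adjacent vertices are relatively prime. -/
def IsOddPrime {V : Type*} [Fintype V] (G : SimpleGraph V) : Prop :=
  ∃ ℓ : V → ℕ, Function.Injective ℓ ∧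
    (∀ v, Odd (ℓ v) ∧ ℓ v ≤ 2 * Fintype.card V - 1) ∧
    ∀ u v, G.Adj u v → Nat.Coprime (ℓ u) (ℓ v)

/-- The `t`-toed caterpillar of length `n + 2`: the spine is the path
`u, v_0, v_1, ..., v_{n-1}, w` (with `u = Sum.inl 0` and `w = Sum.inl 1`), and each
interior spine vertex `v_i` additionally has exactly `t` pendant leaves
`x_{i,0}, ..., x_{i,t-1}`, so each interior vertex has degree `t + 2`. -/
def tToedCaterpillar (n t : ℕ) : SimpleGraph (Fin 2 ⊕ (Fin n ⊕ (Fin n × Fin t))) :=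
  SimpleGraph.fromRel (fun a b =>
    match a, b with
    | Sum.inl a, Sum.inr (Sum.inl i) => (a = 0 ∧ i.val = 0) ∨ (a = 1 ∧ i.val = n - 1)
    | Sum.inr (Sum.inl i), Sum.inr (Sum.inl i') => i'.val = i.val + 1
    | Sum.inr (Sum.inl i), Sum.inr (Sum.inr (i', _)) => i = i'
    | _, _ => False)

/-!
Label the spine `v_1, …, v_n, w, u` by `1, 3, …, 2n + 3` and give the `j`-th toes of all `v_i` the
next `n` odd labels, for each `j` in turn. It remains to match `1, 3, …, 2n - 1` with any `n`
consecutive odd numbers such that matched numbers are coprime, which is a task for Hall's theorem.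

If Hall's condition failed, there would be sets `X` and `Y` on the two sides with more than `n`
elements in total such that every `x ∈ X` shares an odd prime with every `y ∈ Y`. Sieve one side by
the odd primes below `2h`, let `d` be the density of the surviving numbers, and count the pairs by
their common prime `p ≥ 2h`: if `κ ≤ 1/2` bounds `|X| / n` and `|Y| / n` from below, then
`κ (1 - κ / d)` is at most `∑ 1 / p²` over `p ≥ 2h`, up to a small error. On the other hand `κ` is
at least of order `1 / log n`: every `x ∈ X` is coprime to that proportion of the numbers opposite,
none of which is in `Y`, and large primes lie outside `X` as they have too few multiples to share a
factor with all of `Y`. Suitable choices of `h` make this a contradiction for `n ≥ 4096`.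

For smaller `n` it is enough to bound, for each odd `x < 2n`, how many of the `n` numbers opposite
are not coprime to `x`, by the sum of `n / p + 1` over the primes `p` dividing `x`.
-/

namespace CoprimeMatching

open Finset

/-! ### Sieving arithmetic progressions -/

/-- The density of the integers divisible by no prime in `P`. -/
noncomputable def density (P : Finset ℕ) : ℝ := ∏ p ∈ P, (1 - 1 / (p : ℝ))

/-- The indices `j < c` for which the term `b + q * j` is divisible by no element of `P`. -/
def sifted (P : Finset ℕ) (b q c : ℕ) : Finset ℕ := {j ∈ range c | ∀ p ∈ P, ¬ p ∣ b + q * j}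

theorem density_pos {P : Finset ℕ} (hP : ∀ p ∈ P, p.Prime) : 0 < density P :=
  prod_pos fun p hp ↦ by
    have : (1 : ℝ) < p := mod_cast (hP p hp).one_lt
    rw [sub_pos, div_lt_one] <;> linarith

theorem density_le_one {P : Finset ℕ} (hP : ∀ p ∈ P, p.Prime) : density P ≤ 1 :=
  prod_le_one
    (fun p hp ↦ sub_nonneg.2 <| div_le_one_of_le₀ (mod_cast (hP p hp).one_le) p.cast_nonneg)
    fun p _ ↦ sub_le_self _ (by positivity)

theorem exists_forall_dvd_add_mul_iff_modEq {p q : ℕ} (hp : p.Prime) (hpq : q.Coprime p) (b : ℕ) :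
    ∃ r < p, ∀ j, p ∣ b + q * j ↔ r ≡ j [MOD p] := by
  have : Fact p.Prime := ⟨hp⟩
  obtain ⟨r, hrp, hr⟩ : ∃ r < p, p ∣ b + q * r := by
    have hq : (q : ZMod p) ≠ 0 := by
      rwa [Ne, ZMod.natCast_eq_zero_iff, ← hp.coprime_iff_not_dvd, Nat.coprime_comm]
    refine ⟨(-b / q : ZMod p).val, ZMod.val_lt _, ?_⟩
    rw [← ZMod.natCast_eq_zero_iff]
    push_cast [ZMod.natCast_zmod_val]
    field_simp
    ring
  refine ⟨r, hrp, fun j ↦ ?_⟩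
  rw [← Nat.modEq_zero_iff_dvd] at hr ⊢
  refine ⟨fun hj ↦ ?_, fun hj ↦ ((hj.mul_left q).add_left b).symm.trans hr⟩
  exact Nat.ModEq.cancel_left_of_coprime (by simpa [Nat.coprime_comm] using hpq)
    (Nat.ModEq.add_left_cancel' b (hr.trans hj.symm))

theorem abs_add_div_sub_div_le_one {p r : ℕ} (hr : r < p) (c : ℕ) :
    |(((c + r) / p : ℕ) : ℝ) - c / p| ≤ 1 := by
  have hlt : (c + r) / p * p < c + p := by
    have := Nat.div_mul_le_self (c + r) p; omega
  have hle : c < (c + r) / p * p + p := by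
    have := Nat.lt_div_mul_add (a := c + r) (b := p) (by omega); omega
  generalize (c + r) / p = c' at *
  have hp : (0 : ℝ) < p := mod_cast (by omega : 0 < p)
  have hlt' : (c' * p : ℝ) < c + p := mod_cast hlt
  have hle' : (c : ℝ) < c' * p + p := mod_cast hle
  rw [abs_sub_le_iff, sub_le_iff_le_add, sub_le_iff_le_add, ← div_self hp.ne', ← add_div,
    le_div_iff₀ hp, div_le_iff₀ hp, add_mul, div_mul_cancel₀ _ hp.ne']
  constructor <;> linarith

/-- The terms divisible by `p` form an arithmetic progression of difference `q * p`, so sieving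
them by `P` is again a sieve of an arithmetic progression. -/
theorem exists_card_dvd_sifted {p q : ℕ} (hp : p.Prime) (hpq : q.Coprime p) (b c : ℕ) :
    ∃ b' c' : ℕ, |(c' : ℝ) - c / p| ≤ 1 ∧
      ∀ P, #{j ∈ sifted P b q c | p ∣ b + q * j} = #(sifted P b' (q * p) c') := by
  have hp0 : 0 < p := hp.pos
  obtain ⟨r, hrp, hdvd⟩ := exists_forall_dvd_add_mul_iff_modEq hp hpq b
  refine ⟨b + q * r, (c + (p - 1 - r)) / p, abs_add_div_sub_div_le_one (by omega) c, fun P ↦ ?_⟩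
  symm
  refine card_bij (fun i _ ↦ r + p * i) (fun i hi ↦ ?_) (fun i _ i' _ h ↦ ?_) fun j hj ↦ ?_
  · simp only [sifted, mem_filter, mem_range] at hi ⊢
    have hi1 := (Nat.le_div_iff_mul_le hp0).1 (Nat.succ_le_of_lt hi.1)
    refine ⟨⟨?_, ?_⟩, (hdvd _).2 (by simp [Nat.ModEq])⟩
    · rw [Nat.succ_mul, mul_comm i] at hi1; omega
    · simpa only [mul_add, mul_assoc, add_assoc] using hi.2
  · exact Nat.eq_of_mul_eq_mul_left hp0 (Nat.add_left_cancel h)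
  · simp only [sifted, mem_filter, mem_range] at hj ⊢
    have hrj := (hdvd j).1 hj.2
    have hj' : r + p * (j / p) = j := by
      rw [← Nat.mod_eq_of_lt hrp, hrj, Nat.mod_add_div]
    refine ⟨j / p, ⟨?_, ?_⟩, hj'⟩
    · refine (Nat.le_div_iff_mul_le hp0).2 ?_
      rw [Nat.succ_mul, mul_comm (j / p)]; omega
    · rw [mul_assoc, add_assoc, ← mul_add, hj']; exact hj.1.2

theorem abs_card_dvd_sifted_sub_le {P : Finset ℕ} (hP : ∀ p ∈ P, p.Prime) {p q : ℕ}
    (hp : p.Prime) (hpq : q.Coprime p)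
    (h : ∀ b c, |(#(sifted P b (q * p) c) : ℝ) - density P * c| ≤ 2 ^ #P - 1) (b c : ℕ) :
    |(#{j ∈ sifted P b q c | p ∣ b + q * j} : ℝ) - density P * (c / p)| ≤ 2 ^ #P := by
  obtain ⟨b', c', hc', hcard⟩ := exists_card_dvd_sifted hp hpq b c
  have hlen : |density P * (c' - c / p)| ≤ 1 := by
    rw [abs_mul, abs_of_pos (density_pos hP)]
    exact mul_le_one₀ (density_le_one hP) (abs_nonneg _) hc'
  have hsift := h b' c'
  rw [hcard]
  rw [abs_le] at *
  constructor <;> linarith [hsift.1, hsift.2]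

theorem coprime_mul_prime_of_notMem {P : Finset ℕ} {p q : ℕ} (hP : ∀ r ∈ P, r.Prime)
    (hq : ∀ r ∈ P, q.Coprime r) (hp : p.Prime) (hpP : p ∉ P) : ∀ r ∈ P, (q * p).Coprime r :=
  fun r hr ↦ (hq r hr).mul_left <| (Nat.coprime_primes hp (hP r hr)).2 fun h ↦ hpP (h ▸ hr)

theorem abs_card_sifted_sub_le {P : Finset ℕ} (hP : ∀ p ∈ P, p.Prime) {q : ℕ}
    (hq : ∀ p ∈ P, q.Coprime p) (b c : ℕ) :
    |(#(sifted P b q c) : ℝ) - density P * c| ≤ 2 ^ #P - 1 := by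
  induction P using Finset.induction_on generalizing b q c with
  | empty => simp [sifted, density]
  | insert p P hpP ih =>
    simp only [mem_insert, forall_eq_or_imp] at hP hq
    have hsplit : #(sifted P b q c) =
        #{j ∈ sifted P b q c | p ∣ b + q * j} + #(sifted (insert p P) b q c) := by
      rw [← card_filter_add_card_filter_not (fun j ↦ p ∣ b + q * j)]
      congr 2
      ext j
      simp only [sifted, mem_filter, mem_insert, forall_eq_or_imp]
      tauto
    have hall := ih hP.2 hq.2 b c
    have hdvd := abs_card_dvd_sifted_sub_le hP.2 hP.1 hq.1
      (ih hP.2 (coprime_mul_prime_of_notMem hP.2 hq.2 hP.1 hpP)) b c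
    have hdens : density (insert p P) * c = density P * c - density P * (c / p) := by
      rw [density, prod_insert hpP, ← density]; ring
    have hcast : (#(sifted P b q c) : ℝ) =
      #{j ∈ sifted P b q c | p ∣ b + q * j} + #(sifted (insert p P) b q c) := mod_cast hsplit
    rw [card_insert_of_notMem hpP, pow_succ, hdens]
    rw [abs_le] at *
    constructor <;> linarith [hall.1, hall.2]

theorem card_dvd_sifted_le {P : Finset ℕ} (hP : ∀ p ∈ P, p.Prime) {p q : ℕ}
    (hq : ∀ p ∈ P, q.Coprime p) (hp : p.Prime) (hpq : q.Coprime p) (hpP : p ∉ P) (b c : ℕ) :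
    (#{j ∈ sifted P b q c | p ∣ b + q * j} : ℝ) ≤ density P * c / p + 2 ^ #P := by
  rw [mul_div_assoc]
  linarith [(abs_le.1 <| abs_card_dvd_sifted_sub_le hP hp hpq
    (abs_card_sifted_sub_le hP (coprime_mul_prime_of_notMem hP hq hp hpP)) b c).2]

theorem le_card_sifted {P : Finset ℕ} (hP : ∀ p ∈ P, p.Prime) {q : ℕ}
    (hq : ∀ p ∈ P, q.Coprime p) (b c : ℕ) :
    density P * c - 2 ^ #P ≤ #(sifted P b q c) := by
  linarith [(abs_le.1 <| abs_card_sifted_sub_le hP hq b c).1]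

theorem card_dvd_le {p q : ℕ} (hp : p.Prime) (hpq : q.Coprime p) (b c : ℕ) :
    (#{j ∈ range c | p ∣ b + q * j} : ℝ) ≤ c / p + 1 := by
  simpa [sifted, density] using
    card_dvd_sifted_le (P := ∅) (by simp) (by simp) hp hpq (notMem_empty p) b c

/-! ### Violations of Hall's condition -/

/-- The odd primes smaller than `m`. -/
def oddPrimesBelow (m : ℕ) : Finset ℕ := (Nat.primesBelow m).erase 2

theorem mem_oddPrimesBelow {m p : ℕ} : p ∈ oddPrimesBelow m ↔ p.Prime ∧ p ≠ 2 ∧ p < m := by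
  simp only [oddPrimesBelow, mem_erase, Nat.mem_primesBelow]; tauto

theorem coprime_two_of_prime {p : ℕ} (hp : p.Prime) (hp2 : p ≠ 2) : Nat.Coprime 2 p :=
  (Nat.coprime_primes Nat.prime_two hp).2 hp2.symm

theorem density_mul_le_card_coprime {P : Finset ℕ} (hP : ∀ p ∈ P, p.Prime ∧ p ≠ 2) {s : ℕ}
    (hs : Odd s) (b n : ℕ) :
    density P * n - 2 ^ #P - ∑ p ∈ s.primeFactors \ P, (density P * n / p + 2 ^ #P) ≤
      #{j ∈ range n | s.Coprime (b + 2 * j)} := by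
  have hP1 : ∀ p ∈ P, p.Prime := fun p hp ↦ (hP p hp).1
  have hP2 : ∀ p ∈ P, Nat.Coprime 2 p := fun p hp ↦ coprime_two_of_prime (hP p hp).1 (hP p hp).2
  have hsub : sifted P b 2 n ⊆ {j ∈ range n | s.Coprime (b + 2 * j)} ∪
      (s.primeFactors \ P).biUnion fun p ↦ {j ∈ sifted P b 2 n | p ∣ b + 2 * j} := by
    intro j hj
    by_cases hc : s.Coprime (b + 2 * j)
    · exact mem_union_left _ (mem_filter.2 ⟨(mem_filter.1 hj).1, hc⟩)
    · obtain ⟨p, hp, hps, hpj⟩ := Nat.Prime.not_coprime_iff_dvd.1 hc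
      refine mem_union_right _ (mem_biUnion.2 ⟨p, mem_sdiff.2 ⟨?_, fun hpP ↦ ?_⟩,
        mem_filter.2 ⟨hj, hpj⟩⟩)
      · exact Nat.mem_primeFactors.2 ⟨hp, hps, hs.pos.ne'⟩
      · exact (mem_filter.1 hj).2 p hpP hpj
  have hcard : (#(sifted P b 2 n) : ℝ) ≤ #{j ∈ range n | s.Coprime (b + 2 * j)} +
      ∑ p ∈ s.primeFactors \ P, (#{j ∈ sifted P b 2 n | p ∣ b + 2 * j} : ℝ) :=
    mod_cast (card_le_card hsub).trans <| (card_union_le _ _).trans <| by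
      gcongr; exact card_biUnion_le
  have hsum : ∑ p ∈ s.primeFactors \ P, (#{j ∈ sifted P b 2 n | p ∣ b + 2 * j} : ℝ) ≤
      ∑ p ∈ s.primeFactors \ P, (density P * n / p + 2 ^ #P) := by
    refine sum_le_sum fun p hp ↦ ?_
    rw [mem_sdiff, Nat.mem_primeFactors] at hp
    have hp2 : Nat.Coprime 2 p := Nat.coprime_two_left.2 (hs.of_dvd_nat hp.1.2.1)
    exact card_dvd_sifted_le hP1 hP2 hp.1.1 hp2 hp.2 b n
  linarith [le_card_sifted hP1 hP2 b n]

theorem le_card_sifted_inter {P : Finset ℕ} (hP : ∀ p ∈ P, p.Prime) {q : ℕ}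
    (hq : ∀ p ∈ P, q.Coprime p) (b : ℕ) {n : ℕ} {Y : Finset ℕ} (hY : Y ⊆ range n) :
    density P * n - 2 ^ #P - (n - #Y) ≤ #(sifted P b q n ∩ Y) := by
  set S := sifted P b q n
  have hcover : #S ≤ #(S ∩ Y) + (n - #Y) := calc
    #S = #(S ∩ Y) + #(S \ Y) := (card_inter_add_card_sdiff S Y).symm
    _ ≤ #(S ∩ Y) + #(range n \ Y) := by gcongr; exact filter_subset _ _
    _ = #(S ∩ Y) + (n - #Y) := by rw [card_sdiff_of_subset hY, card_range]
  have hYn : #Y ≤ n := (card_le_card hY).trans_eq (card_range n)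
  have hcover' : (#S : ℝ) ≤ #(S ∩ Y) + (n - #Y) := by
    rw [← Nat.cast_sub hYn]; exact mod_cast hcover
  linarith [le_card_sifted hP hq b n]

/-- Counts the pairs of `X × Y` whose second term survives the sieve: each of them shares a prime
outside `P`. -/
theorem card_mul_le_sum_of_common_prime {P : Finset ℕ} (hP : ∀ p ∈ P, p.Prime ∧ p ≠ 2)
    {n a b : ℕ} {X Y : Finset ℕ} (hX : X ⊆ range n) (hY : Y ⊆ range n)
    (h : ∀ i ∈ X, ∀ j ∈ Y, ∃ p ∈ oddPrimesBelow (2 * n), p ∣ a + 2 * i ∧ p ∣ b + 2 * j) :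
    (#X : ℝ) * (density P * n - 2 ^ #P - (n - #Y)) ≤
      ∑ p ∈ oddPrimesBelow (2 * n) \ P, ((n : ℝ) / p + 1) * (density P * n / p + 2 ^ #P) := by
  have hP1 : ∀ p ∈ P, p.Prime := fun p hp ↦ (hP p hp).1
  have hP2 : ∀ p ∈ P, Nat.Coprime 2 p := fun p hp ↦ coprime_two_of_prime (hP p hp).1 (hP p hp).2
  have hSY := le_card_sifted_inter hP1 hP2 b hY
  set S := sifted P b 2 n
  have hsub : X ×ˢ (S ∩ Y) ⊆ (oddPrimesBelow (2 * n) \ P).biUnion fun p ↦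
      {i ∈ range n | p ∣ a + 2 * i} ×ˢ {j ∈ S | p ∣ b + 2 * j} := by
    rintro ⟨i, j⟩ hij
    simp only [mem_product, mem_inter] at hij
    obtain ⟨p, hp, hpi, hpj⟩ := h i hij.1 j hij.2.2
    have hpP : p ∉ P := fun hpP ↦ (mem_filter.1 hij.2.1).2 p hpP hpj
    exact mem_biUnion.2 ⟨p, mem_sdiff.2 ⟨hp, hpP⟩, mem_product.2
      ⟨mem_filter.2 ⟨hX hij.1, hpi⟩, mem_filter.2 ⟨hij.2.1, hpj⟩⟩⟩
  calc (#X : ℝ) * (density P * n - 2 ^ #P - (n - #Y)) ≤ #X * #(S ∩ Y) := by gcongr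
    _ ≤ ∑ p ∈ oddPrimesBelow (2 * n) \ P,
        (#{i ∈ range n | p ∣ a + 2 * i} : ℝ) * #{j ∈ S | p ∣ b + 2 * j} := by
      have := (card_le_card hsub).trans card_biUnion_le
      simp only [card_product] at this
      exact mod_cast this
    _ ≤ _ := by
      refine sum_le_sum fun p hp ↦ ?_
      rw [mem_sdiff, mem_oddPrimesBelow] at hp
      have hp2 := coprime_two_of_prime hp.1.1 hp.1.2.1
      gcongr
      · exact card_dvd_le hp.1.1 hp2 a n
      · exact card_dvd_sifted_le hP1 hP2 hp.1.1 hp2 hp.2 b n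

/-- A violation of Hall's condition for the bipartite graph that joins `i < n` to `j < n` when
`2 * i + 1` and `a + 2 * j` are coprime: `X` violates the condition, and `Y` consists of
non-neighbours of `X`. -/
structure HallViolator (n a : ℕ) (X Y : Finset ℕ) : Prop where
  left_subset : X ⊆ range n
  right_subset : Y ⊆ range n
  not_coprime : ∀ i ∈ X, ∀ j ∈ Y, ¬ Nat.Coprime (2 * i + 1) (a + 2 * j)
  lt_card_add_card : n < #X + #Y

theorem exists_injective_coprime_of_forall_not_hallViolator {n a : ℕ}
    (h : ∀ X Y, ¬ HallViolator n a X Y) :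
    ∃ σ : Fin n → Fin n, Function.Injective σ ∧
      ∀ i, Nat.Coprime (2 * i.val + 1) (a + 2 * (σ i).val) := by
  let N (i : Fin n) : Finset (Fin n) := {j | Nat.Coprime (2 * i.val + 1) (a + 2 * j.val)}
  suffices hN : ∀ s : Finset (Fin n), #s ≤ #(s.biUnion N) by
    obtain ⟨σ, hσ, hmem⟩ := (all_card_le_biUnion_card_iff_exists_injective N).1 hN
    exact ⟨σ, hσ, fun i ↦ (mem_filter.1 (hmem i)).2⟩
  intro s
  by_contra! hs
  refine h (s.map Fin.valEmbedding) ((s.biUnion N)ᶜ.map Fin.valEmbedding)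
    ⟨fun i hi ↦ ?_, fun j hj ↦ ?_, ?_, ?_⟩
  · obtain ⟨i, -, rfl⟩ := mem_map.1 hi
    exact mem_range.2 i.isLt
  · obtain ⟨j, -, rfl⟩ := mem_map.1 hj
    exact mem_range.2 j.isLt
  · simp only [mem_map, mem_compl, mem_biUnion, not_exists, not_and, forall_exists_index, and_imp,
      forall_apply_eq_imp_iff₂, Fin.valEmbedding_apply]
    exact fun i hi j hj hij ↦ hj i hi (mem_filter.2 ⟨mem_univ _, hij⟩)
  · have := card_le_univ (s.biUnion N)
    rw [card_map, card_map, card_compl]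
    rw [Fintype.card_fin] at *
    omega

namespace HallViolator

variable {n a : ℕ} {X Y : Finset ℕ} (hV : HallViolator n a X Y)
include hV

theorem card_left_le : #X ≤ n := (card_le_card hV.left_subset).trans_eq (card_range n)

theorem card_right_le : #Y ≤ n := (card_le_card hV.right_subset).trans_eq (card_range n)

theorem pos : 0 < n := by
  have := hV.card_left_le; have := hV.card_right_le; have := hV.lt_card_add_card; omega

theorem left_nonempty : X.Nonempty := card_pos.1 <| by
  have := hV.card_right_le; have := hV.lt_card_add_card; omega

theorem right_nonempty : Y.Nonempty := card_pos.1 <| by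
  have := hV.card_left_le; have := hV.lt_card_add_card; omega

theorem exists_common_prime {i j : ℕ} (hi : i ∈ X) (hj : j ∈ Y) :
    ∃ p ∈ oddPrimesBelow (2 * n), p ∣ 1 + 2 * i ∧ p ∣ a + 2 * j := by
  obtain ⟨p, hp, hpi, hpj⟩ := Nat.Prime.not_coprime_iff_dvd.1 (hV.not_coprime i hi j hj)
  refine ⟨p, mem_oddPrimesBelow.2 ⟨hp, ?_, ?_⟩, add_comm 1 (2 * i) ▸ hpi, hpj⟩
  · rintro rfl; omega
  · have := Nat.le_of_dvd (by omega) hpi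
    have := mem_range.1 (hV.left_subset hi)
    omega

theorem card_coprime_lt {i : ℕ} (hi : i ∈ X) :
    #{j ∈ range n | Nat.Coprime (2 * i + 1) (a + 2 * j)} < #X := by
  have hdisj : {j ∈ range n | Nat.Coprime (2 * i + 1) (a + 2 * j)} ⊆ range n \ Y := fun j hj ↦
    mem_sdiff.2 ⟨(mem_filter.1 hj).1, fun hjY ↦ hV.not_coprime i hi j hjY (mem_filter.1 hj).2⟩
  have := card_le_card hdisj
  have := hV.lt_card_add_card
  rw [card_sdiff_of_subset hV.right_subset, card_range] at *
  have := hV.card_right_le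
  omega

theorem ne_of_mem_left {i p : ℕ} (hp : p.Prime) (hp2 : p ≠ 2) (hnp : n < (#Y - 1) * p)
    (hi : i ∈ X) : 2 * i + 1 ≠ p := by
  rintro rfl
  have hsub : Y ⊆ {j ∈ range n | 2 * i + 1 ∣ a + 2 * j} := fun j hj ↦ mem_filter.2
    ⟨hV.right_subset hj, not_not.1 fun hpj ↦ hV.not_coprime i hi j hj <|
      hp.coprime_iff_not_dvd.2 hpj⟩
  have hYp : (#Y : ℝ) ≤ n / (2 * i + 1 : ℕ) + 1 := (Nat.cast_le.2 (card_le_card hsub)).trans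
    (card_dvd_le hp (coprime_two_of_prime hp hp2) a n)
  have hnp' : (n : ℝ) < (#Y - 1) * (2 * i + 1 : ℕ) := by
    rw [← Nat.cast_one (R := ℝ), ← Nat.cast_sub hV.right_nonempty.card_pos]; exact mod_cast hnp
  rw [← div_lt_iff₀ (mod_cast hp.pos)] at hnp'
  linarith

theorem card_primes_lt :
    #{p ∈ oddPrimesBelow (2 * n) | n < (#Y - 1) * p} + 1 < #Y := by
  set R := {p ∈ oddPrimesBelow (2 * n) | n < (#Y - 1) * p}
  have hR : ∀ p ∈ R, p.Prime ∧ p ≠ 2 ∧ p < 2 * n ∧ n < (#Y - 1) * p := fun p hp ↦ by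
    rw [mem_filter, mem_oddPrimesBelow] at hp; tauto
  have h1R : 1 ∉ R := fun h ↦ Nat.not_prime_one (hR 1 h).1
  have hsub : insert 1 R ⊆ (range n \ X).image (2 * · + 1) := by
    refine insert_subset ?_ fun p hp ↦ ?_
    · obtain ⟨j, hj⟩ := hV.right_nonempty
      exact mem_image.2 ⟨0, mem_sdiff.2 ⟨mem_range.2 hV.pos,
        fun h ↦ hV.not_coprime 0 h j hj (by simp)⟩, rfl⟩
    · obtain ⟨hprime, hp2, hlt, hnp⟩ := hR p hp
      obtain ⟨i, rfl⟩ := hprime.odd_of_ne_two hp2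
      exact mem_image.2 ⟨i, mem_sdiff.2 ⟨mem_range.2 (by omega),
        fun h ↦ hV.ne_of_mem_left hprime hp2 hnp h rfl⟩, rfl⟩
  have := (card_le_card hsub).trans card_image_le
  rw [card_insert_of_notMem h1R, card_sdiff_of_subset hV.left_subset, card_range] at this
  have := hV.lt_card_add_card
  have := hV.card_left_le
  omega

end HallViolator

/-! ### Small intervals -/

/-- The number of `j < n` for which `a + 2 * j` is not coprime to `s`. -/
def nonCoprimeCount (n a s : ℕ) : ℕ := #{j ∈ range n | ¬ s.Coprime (a + 2 * j)}

theorem nonCoprimeCount_le (n a s : ℕ) : nonCoprimeCount n a s ≤ n :=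
  (card_filter_le _ _).trans_eq (card_range n)

theorem nonCoprimeCount_mono_left {m n : ℕ} (h : m ≤ n) (a s : ℕ) :
    nonCoprimeCount m a s ≤ nonCoprimeCount n a s :=
  card_le_card (filter_subset_filter _ (range_mono h))

theorem nonCoprimeCount_one (n a : ℕ) : nonCoprimeCount n a 1 = 0 := by
  simp [nonCoprimeCount]

theorem nonCoprimeCount_mul_le (n a s t : ℕ) :
    nonCoprimeCount n a (s * t) ≤ nonCoprimeCount n a s + nonCoprimeCount n a t := by
  refine (card_le_card fun j hj ↦ ?_).trans (card_union_le _ _)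
  simp only [mem_union, mem_filter, Nat.coprime_mul_iff_left] at *
  tauto

theorem nonCoprimeCount_mul_of_dvd {s t : ℕ} (h : s ∣ t) (n a : ℕ) :
    nonCoprimeCount n a (s * t) = nonCoprimeCount n a t := by
  refine congrArg card (filter_congr fun j _ ↦ not_congr ?_)
  rw [Nat.coprime_mul_iff_left]
  exact and_iff_right_of_imp (Nat.Coprime.coprime_dvd_left h)

theorem nonCoprimeCount_prime_le {p : ℕ} (hp : p.Prime) (hodd : Odd p) (n a : ℕ) :
    nonCoprimeCount n a p ≤ n / p + 1 := by
  have hle := card_dvd_le hp (Nat.coprime_two_left.2 hodd) a n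
  simp only [nonCoprimeCount, hp.coprime_iff_not_dvd, not_not]
  rw [← Nat.floor_div_eq_div (K := ℝ), ← Nat.floor_add_one (by positivity)]
  exact Nat.le_floor hle

theorem prime_of_forall_prime_dvd_le {p s : ℕ} (hs : 1 < s) (hsp : s < p * p)
    (h : ∀ q, q.Prime → q ∣ s → p ≤ q) : s.Prime := by
  by_contra hprime
  have hle := h _ (Nat.minFac_prime hs.ne') (Nat.minFac_dvd s)
  have hsq := Nat.minFac_sq_le_self (by omega) hprime
  nlinarith

/-- An upper bound for `nonCoprimeCount n a s`, found by trial division of `s` by the odd numbers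
`p, p + 2, …`, where the first argument after `n` limits the number of steps. -/
def trialBound (n : ℕ) : ℕ → ℕ → ℕ → ℕ
  | 0, _, _ => n
  | k + 1, p, s =>
    if s < p * p then if s ≤ 1 then 0 else n / s + 1
    else if s % p = 0 then
      if s / p % p = 0 then trialBound n k p (s / p)
      else n / p + 1 + trialBound n k (p + 2) (s / p)
    else trialBound n k (p + 2) s

theorem nonCoprimeCount_le_trialBound (n a k : ℕ) {p s : ℕ} (hp : 1 < p) (hpodd : Odd p)
    (hs : Odd s) (hrough : ∀ q, q.Prime → q ∣ s → p ≤ q) :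
    nonCoprimeCount n a s ≤ trialBound n k p s := by
  induction k generalizing p s with
  | zero => exact nonCoprimeCount_le n a s
  | succ k ih =>
    have hnext : ∀ t, t ∣ s → ¬ p ∣ t → ∀ q, q.Prime → q ∣ t → p + 2 ≤ q := by
      intro t hts hpt q hq hqt
      have hle := hrough q hq (hqt.trans hts)
      have hne : p ≠ q := by rintro rfl; exact hpt hqt
      have := Nat.odd_iff.1 (hs.of_dvd_nat (hqt.trans hts))
      have := Nat.odd_iff.1 hpodd
      omega
    have hpodd' : Odd (p + 2) := hpodd.add_even even_two
    rw [trialBound]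
    split_ifs with hlt hs1 hps hpp
    · rw [show s = 1 by have := hs.pos; omega, nonCoprimeCount_one]
    · exact nonCoprimeCount_prime_le
        (prime_of_forall_prime_dvd_le (by omega) hlt hrough) hs n a
    all_goals try obtain ⟨t, rfl⟩ := Nat.dvd_of_mod_eq_zero hps
    all_goals try rw [Nat.mul_div_cancel_left t (by omega)] at *
    · rw [nonCoprimeCount_mul_of_dvd (Nat.dvd_of_mod_eq_zero hpp)]
      exact ih hp hpodd (Nat.odd_mul.1 hs).2 fun q hq hqt ↦ hrough q hq (hqt.mul_left p)
    · have hprime : p.Prime := by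
        have := hrough _ (Nat.minFac_prime hp.ne') ((Nat.minFac_dvd p).mul_right t)
        rw [← (Nat.minFac_le (by omega)).antisymm this]
        exact Nat.minFac_prime hp.ne'
      grw [nonCoprimeCount_mul_le, nonCoprimeCount_prime_le hprime hpodd]
      exact Nat.add_le_add_left (ih (by omega) hpodd' (Nat.odd_mul.1 hs).2 <|
        hnext t (dvd_mul_left t p) fun h ↦ hpp (Nat.mod_eq_zero_of_dvd h)) _
    · exact ih (by omega) hpodd' hs <|
        hnext s dvd_rfl fun h ↦ hps (Nat.mod_eq_zero_of_dvd h)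

/-- The number of `i` with `lo ≤ i < lo + 2 ^ d` and `q i`, by a recursion of depth `d`, which
keeps its evaluation by the kernel shallow. -/
def countIco (q : ℕ → Bool) : ℕ → ℕ → ℕ
  | 0, lo => (q lo).toNat
  | d + 1, lo => countIco q d lo + countIco q d (lo + 2 ^ d)

theorem countIco_eq_card (q : ℕ → Bool) (d lo : ℕ) :
    countIco q d lo = #{i ∈ Ico lo (lo + 2 ^ d) | q i} := by
  induction d generalizing lo with
  | zero => cases h : q lo <;> simp [countIco, filter_singleton, h]
  | succ d ih =>
    rw [countIco, ih, ih, pow_succ, mul_two, ← add_assoc,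
      ← Ico_union_Ico_eq_Ico (Nat.le_add_right lo (2 ^ d)) (Nat.le_add_right (lo + 2 ^ d) (2 ^ d)),
      filter_union,
      card_union_of_disjoint (disjoint_filter_filter (Ico_disjoint_Ico_consecutive _ _ _))]

/-- The number of `i < m` for which trial division shows `nonCoprimeCount n a (2 * i + 1) ≤ b`. -/
def countTrialBoundLE (n m b : ℕ) : ℕ :=
  countIco (fun i ↦ i < m && trialBound n 60 3 (2 * i + 1) ≤ b) m.size 0

theorem countTrialBoundLE_eq_card (n m b : ℕ) :
    countTrialBoundLE n m b = #{i ∈ range m | trialBound n 60 3 (2 * i + 1) ≤ b} := by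
  rw [countTrialBoundLE, countIco_eq_card]
  congr 1
  ext i
  have := Nat.lt_size_self m
  simp only [mem_filter, mem_Ico, mem_range, Bool.and_eq_true, decide_eq_true_eq]
  omega

theorem nonCoprimeCount_two_mul_add_one_le_trialBound (n a k i : ℕ) :
    nonCoprimeCount n a (2 * i + 1) ≤ trialBound n k 3 (2 * i + 1) := by
  refine nonCoprimeCount_le_trialBound n a k (by norm_num) (by decide) (odd_two_mul_add_one i) ?_
  intro q hq hqs
  have hodd := Nat.odd_iff.1 ((odd_two_mul_add_one i).of_dvd_nat hqs)
  have := hq.two_le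
  omega

theorem not_hallViolator_of_forall_lt_card {n a : ℕ} {X Y : Finset ℕ}
    (h : ∀ b < n, b < #{i ∈ range n | nonCoprimeCount n a (2 * i + 1) ≤ b}) :
    ¬ HallViolator n a X Y := by
  intro hV
  have hY := hV.right_nonempty.card_pos
  have hYn := hV.card_right_le
  have hdisj : {i ∈ range n | nonCoprimeCount n a (2 * i + 1) ≤ #Y - 1} ⊆ range n \ X := by
    intro i hi
    rw [mem_filter] at hi
    refine mem_sdiff.2 ⟨hi.1, fun hiX ↦ ?_⟩
    have : #Y ≤ nonCoprimeCount n a (2 * i + 1) := card_le_card fun j hj ↦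
      mem_filter.2 ⟨hV.right_subset hj, hV.not_coprime i hiX j hj⟩
    omega
  have hcard := card_le_card hdisj
  rw [card_sdiff_of_subset hV.left_subset, card_range] at hcard
  have := h (#Y - 1) (by omega)
  have := hV.lt_card_add_card
  have := hV.card_left_le
  omega

/-- Below `b₀ = g 0` the claim holds as `g 0` values are at most `0 ≤ b`, between `b₀` and
`b₁ = g b₀` as `b₁` values are at most `b₀ ≤ b`, and so on. -/
theorem lt_card_filter_of_lt_iterate {m : ℕ} {F g : ℕ → ℕ}
    (hg : ∀ b, g b ≤ #{i ∈ range m | F i ≤ b}) (k : ℕ) {b : ℕ} (hb : b < g^[k] 0) :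
    b < #{i ∈ range m | F i ≤ b} := by
  induction k with
  | zero => simp at hb
  | succ k ih =>
    rw [Function.iterate_succ_apply'] at hb
    obtain h | h := lt_or_ge b (g^[k] 0)
    · exact ih h
    · exact (hb.trans_le (hg _)).trans_le
        (card_le_card (monotone_filter_right _ fun i _ hi ↦ hi.trans h))

/-- A certificate that no `n` with `n₁ ≤ n < n₂` admits a Hall violator. With
`N b = countTrialBoundLE (n₂ - 1) n₁ b`, the `b` below the eighth iterate `c` of `N` at `0` satisfy
`b < N b`, and the remaining ones are harmless as all trial bounds are at most `c`. -/
def BlockCertificate (n₁ n₂ : ℕ) : Prop :=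
  countTrialBoundLE (n₂ - 1) (n₂ - 1) ((countTrialBoundLE (n₂ - 1) n₁)^[8] 0) = n₂ - 1

theorem BlockCertificate.not_hallViolator {n₁ n₂ n a : ℕ} {X Y : Finset ℕ}
    (h : BlockCertificate n₁ n₂) (hn₁ : n₁ ≤ n) (hn₂ : n < n₂) : ¬ HallViolator n a X Y := by
  refine not_hallViolator_of_forall_lt_card fun b hb ↦ ?_
  set c := (countTrialBoundLE (n₂ - 1) n₁)^[8] 0 with hc
  have hF : ∀ i, nonCoprimeCount n a (2 * i + 1) ≤ trialBound (n₂ - 1) 60 3 (2 * i + 1) := fun i ↦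
    (nonCoprimeCount_mono_left (by omega) a _).trans
      (nonCoprimeCount_two_mul_add_one_le_trialBound _ a 60 i)
  obtain hbc | hbc := lt_or_ge b c
  · refine lt_card_filter_of_lt_iterate (fun b ↦ ?_) 8 hbc
    rw [countTrialBoundLE_eq_card]
    exact card_le_card fun i hi ↦ by
      rw [mem_filter, mem_range] at *
      exact ⟨hi.1.trans_le hn₁, (hF i).trans hi.2⟩
  · rw [BlockCertificate, countTrialBoundLE_eq_card, ← hc] at h
    have hall := (card_filter_eq_iff.1 (h.trans (card_range _).symm))
    rw [filter_true_of_mem, card_range]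
    · exact hb
    · intro i hi
      rw [mem_range] at hi
      exact ((hF i).trans (hall i (mem_range.2 (by omega)))).trans hbc

instance (n₁ n₂ : ℕ) : Decidable (BlockCertificate n₁ n₂) :=
  inferInstanceAs (Decidable (_ = _))

theorem exists_rel_of_isChain {R : ℕ → ℕ → Prop} {l : List ℕ} (h : l.IsChain R) {n : ℕ}
    (hhead : ∃ x ∈ l.head?, x ≤ n) (hlast : ∃ y ∈ l.getLast?, n < y) :
    ∃ x y, R x y ∧ x ≤ n ∧ n < y := by
  induction l with
  | nil => simp at hhead
  | cons x l ih =>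
    cases l with
    | nil => simp at hhead hlast; omega
    | cons y l =>
      rw [List.isChain_cons_cons] at h
      obtain hy | hy := lt_or_ge n y
      · exact ⟨x, y, h.1, by simpa using hhead, hy⟩
      · exact ih h.2 ⟨y, rfl, hy⟩ (by simpa using hlast)

theorem isChain_blockCertificate : List.IsChain BlockCertificate
    [1, 3, 4, 6, 9, 14, 22, 37, 54, 77, 111, 161, 234, 342, 500, 650, 844, 1097, 1428, 1859, 2419,
      3148, 4096] := by
  decide +kernel

theorem not_hallViolator_of_lt {n a : ℕ} {X Y : Finset ℕ} (hn : n < 4096) :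
    ¬ HallViolator n a X Y := fun hV ↦
  have ⟨_, _, hblock, hn₁, hn₂⟩ := exists_rel_of_isChain isChain_blockCertificate (n := n)
    ⟨1, rfl, hV.pos⟩ ⟨4096, rfl, hn⟩
  hblock.not_hallViolator hn₁ hn₂ hV

open Real

/-! ### Sums over primes -/

theorem oddPrimesBelow_succ (h : ℕ) :
    oddPrimesBelow (2 * (h + 1)) = if (2 * h + 1).Prime
      then insert (2 * h + 1) (oddPrimesBelow (2 * h)) else oddPrimesBelow (2 * h) := by
  ext p
  split_ifs with hp <;> simp only [mem_insert, mem_oddPrimesBelow]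
  · refine ⟨fun ⟨h1, h2, h3⟩ ↦ ?_, ?_⟩
    · obtain ⟨k, rfl⟩ := h1.odd_of_ne_two h2
      by_cases hk : k = h
      · exact Or.inl (by rw [hk])
      · exact Or.inr ⟨h1, h2, by omega⟩
    · rintro (rfl | ⟨h1, h2, h3⟩)
      · exact ⟨hp, by omega, by omega⟩
      · exact ⟨h1, h2, by omega⟩
  · refine ⟨fun ⟨h1, h2, h3⟩ ↦ ⟨h1, h2, ?_⟩, fun ⟨h1, h2, _⟩ ↦ ⟨h1, h2, by omega⟩⟩
    obtain ⟨k, rfl⟩ := h1.odd_of_ne_two h2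
    have : k ≠ h := fun hk ↦ hp (hk ▸ h1)
    omega

theorem sum_oddPrimesBelow_sdiff_le {f : ℕ → ℝ} (hf : ∀ k, 0 ≤ f k) (h n : ℕ) :
    ∑ p ∈ oddPrimesBelow (2 * n) \ oddPrimesBelow (2 * h), f p ≤
      ∑ l ∈ Ico h n, f (2 * l + 1) := by
  have hsub : oddPrimesBelow (2 * n) \ oddPrimesBelow (2 * h) ⊆ (Ico h n).image (2 * · + 1) := by
    intro p hp
    simp only [mem_sdiff, mem_oddPrimesBelow, not_and, not_lt] at hp
    obtain ⟨⟨hp1, hp2, hp3⟩, hp4⟩ := hp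
    obtain ⟨k, rfl⟩ := hp1.odd_of_ne_two hp2
    have := hp4 hp1 hp2
    exact mem_image.2 ⟨k, mem_Ico.2 ⟨by omega, by omega⟩, rfl⟩
  calc _ ≤ ∑ p ∈ (Ico h n).image (2 * · + 1), f p :=
        sum_le_sum_of_subset_of_nonneg hsub fun p _ _ ↦ hf p
    _ = _ := sum_image fun k _ l _ hkl ↦ by simpa using hkl

theorem sum_Ico_one_inv_odd_le {n : ℕ} (hn : 1 ≤ n) :
    ∑ l ∈ Ico 1 n, 1 / ((2 * l + 1 : ℕ) : ℝ) ≤ log n / 2 := by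
  induction n, hn using Nat.le_induction with
  | base => simp
  | succ k hk ih =>
    have hk0 : (0 : ℝ) < k := mod_cast hk
    have hlog : (2 : ℝ) / (2 * k + 1) ≤ log (1 + (k : ℝ)⁻¹) := by
      have hs := hasSum_log_one_add_inv hk0
      have hle := hs.summable.sum_le_tsum {0} (fun i _ ↦ by positivity)
      rw [hs.tsum_eq, sum_singleton] at hle
      refine le_of_eq_of_le ?_ hle
      norm_num
      ring
    have hsucc : log ((k + 1 : ℕ) : ℝ) = log k + log (1 + (k : ℝ)⁻¹) := by
      rw [← log_mul hk0.ne' (by positivity)]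
      congr 1
      push_cast
      field_simp
    rw [sum_Ico_succ_top hk, hsucc]
    push_cast at *
    linarith [show (1 : ℝ) / (2 * k + 1) = 2 / (2 * k + 1) / 2 by ring]

theorem sum_Ico_inv_odd_sq_le {h : ℕ} (hh : 1 ≤ h) (n : ℕ) :
    ∑ l ∈ Ico h n, 1 / ((2 * l + 1 : ℕ) : ℝ) ^ 2 ≤ (1 / (4 * h) : ℝ) := by
  obtain hn | hn := lt_or_ge n h
  · rw [Ico_eq_empty_of_le hn.le, sum_empty]; positivity
  suffices ∑ l ∈ Ico h n, 1 / ((2 * l + 1 : ℕ) : ℝ) ^ 2 ≤ (1 / (4 * h) - 1 / (4 * n) : ℝ) from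
    this.trans (sub_le_self _ (by positivity))
  induction n, hn using Nat.le_induction with
  | base => simp
  | succ k hk ih =>
    have hk0 : (0 : ℝ) < k := mod_cast hh.trans hk
    have hstep : 1 / ((2 * k + 1 : ℕ) : ℝ) ^ 2 ≤ 1 / (4 * k) - 1 / (4 * (k + 1 : ℕ)) := by
      push_cast
      rw [div_sub_div _ _ (by positivity) (by positivity),
        div_le_div_iff₀ (by positivity) (by positivity)]
      nlinarith
    rw [sum_Ico_succ_top hk]
    linarith

theorem sum_inv_oddPrimesBelow_sdiff_le {h n : ℕ} (hh : 1 ≤ h) (hn : 1 ≤ n) :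
    ∑ p ∈ oddPrimesBelow (2 * n) \ oddPrimesBelow (2 * h), 1 / (p : ℝ) ≤ log n / 2 :=
  calc _ ≤ ∑ l ∈ Ico h n, 1 / ((2 * l + 1 : ℕ) : ℝ) :=
        sum_oddPrimesBelow_sdiff_le (f := fun k ↦ 1 / (k : ℝ)) (fun _ ↦ by positivity) h n
    _ ≤ ∑ l ∈ Ico 1 n, 1 / ((2 * l + 1 : ℕ) : ℝ) := by gcongr
    _ ≤ _ := sum_Ico_one_inv_odd_le hn

theorem sum_inv_sq_oddPrimesBelow_sdiff_le {h : ℕ} (hh : 1 ≤ h) (n : ℕ) :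
    ∑ p ∈ oddPrimesBelow (2 * n) \ oddPrimesBelow (2 * h), 1 / (p : ℝ) ^ 2 ≤ (1 / (4 * h) : ℝ) :=
  (sum_oddPrimesBelow_sdiff_le (f := fun k ↦ 1 / (k : ℝ) ^ 2) (fun _ ↦ by positivity) h n).trans
    (sum_Ico_inv_odd_sq_le hh n)

theorem card_oddPrimesBelow_sdiff_le (h n : ℕ) :
    #(oddPrimesBelow (2 * n) \ oddPrimesBelow (2 * h)) ≤ n := by
  have := sum_oddPrimesBelow_sdiff_le (f := fun _ ↦ 1) (fun _ ↦ zero_le_one) h n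
  simp only [sum_const, nsmul_eq_mul, mul_one, Nat.card_Ico] at this
  exact (Nat.cast_le.1 this).trans (Nat.sub_le n h)

theorem sum_inv_sq_oddPrimesBelow_sdiff_le_add (h : ℕ) {m : ℕ} (hm : 1 ≤ m) (n : ℕ) :
    ∑ p ∈ oddPrimesBelow (2 * n) \ oddPrimesBelow (2 * h), 1 / (p : ℝ) ^ 2 ≤
      ∑ p ∈ oddPrimesBelow (2 * m) \ oddPrimesBelow (2 * h), 1 / (p : ℝ) ^ 2 +
        (1 / (4 * m) : ℝ) := by
  grw [← sum_inv_sq_oddPrimesBelow_sdiff_le hm n, ← sum_union_inter]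
  refine le_add_of_le_of_nonneg ?_ (sum_nonneg fun _ _ ↦ by positivity)
  refine sum_le_sum_of_subset_of_nonneg (fun p hp ↦ ?_) fun _ _ _ ↦ by positivity
  simp only [mem_union, mem_sdiff] at *
  tauto

theorem one_le_density_sq_mul {h : ℕ} (hh : 1 ≤ h) :
    1 ≤ density (oddPrimesBelow (2 * h)) ^ 2 * (2 * h - 1) := by
  induction h, hh using Nat.le_induction with
  | base => rw [show oddPrimesBelow (2 * 1) = ∅ by decide]; norm_num [density]
  | succ h hh ih =>
    have : (1 : ℝ) ≤ h := mod_cast hh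
    rw [oddPrimesBelow_succ]
    split_ifs
    · rw [density, prod_insert (by simp [mem_oddPrimesBelow]), ← density]
      set d := density (oddPrimesBelow (2 * h))
      have hstep : (2 * h - 1 : ℝ) ≤
          (1 - 1 / ((2 * h + 1 : ℕ) : ℝ)) ^ 2 * (2 * (h + 1 : ℕ) - 1) := by
        push_cast
        have h1 : (1 - 1 / (2 * h + 1) : ℝ) ^ 2 * (2 * (h + 1) - 1) =
          4 * h ^ 2 / (2 * h + 1) := by field_simp; ring
        rw [h1, le_div_iff₀ (by positivity)]
        nlinarith
      calc 1 ≤ d ^ 2 * (2 * h - 1) := ih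
        _ ≤ d ^ 2 * ((1 - 1 / ((2 * h + 1 : ℕ) : ℝ)) ^ 2 * (2 * (h + 1 : ℕ) - 1)) := by gcongr
        _ = _ := by ring
    · refine ih.trans ?_
      gcongr
      simp

theorem card_oddPrimesBelow_le {h : ℕ} (hh : 5 ≤ h) : #(oddPrimesBelow (2 * h)) ≤ h - 2 := by
  induction h, hh using Nat.le_induction with
  | base => decide
  | succ h hh ih =>
    rw [oddPrimesBelow_succ]
    split_ifs
    · exact (card_insert_le _ _).trans (by omega)
    · omega

theorem log_two_mul_le {n : ℕ} (hn : 4096 ≤ n) : log (2 * n) ≤ 0.00221 * n := by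
  have hn' : (4096 : ℝ) ≤ n := mod_cast hn
  have htangent := log_le_sub_one_of_pos (show (0 : ℝ) < 2 * n / 2 ^ 13 by positivity)
  rw [log_div (by positivity) (by positivity), log_pow] at htangent
  push_cast at htangent
  linarith [log_two_lt_d9]

theorem nine_le_log_two_mul {n : ℕ} (hn : 4096 ≤ n) : 9 ≤ log (2 * n) := by
  have hn' : (4096 : ℝ) ≤ n := mod_cast hn
  have hlog : log (2 ^ 13) ≤ log (2 * n) := log_le_log (by norm_num) (by linarith)
  rw [log_pow] at hlog
  push_cast at hlog
  linarith [log_two_gt_d9]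

theorem mul_le_theta_two_mul {n : ℕ} (hn : 4096 ≤ n) : 0.97 * n ≤ Chebyshev.theta (2 * n) := by
  have hn' : (4096 : ℝ) ≤ n := mod_cast hn
  set s := √(2 * n : ℝ) with hs
  have hs2 : s ^ 2 = 2 * n := sq_sqrt (by positivity)
  have hs0 : 90.5 ≤ s := le_sqrt_of_sq_le (by linarith)
  have hlog90 : log 90 ≤ 4.5 := by
    have he : (90 : ℝ) ^ 2 ≤ exp 1 ^ 9 := le_trans (by norm_num)
      (pow_le_pow_left₀ (by norm_num) exp_one_gt_d9.le 9)
    have := log_le_log (by norm_num) he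
    rw [log_pow, log_pow, log_exp] at this
    push_cast at this
    linarith
  have hlog : log (2 * n) ≤ 7 + s / 45 := by
    have htangent := log_le_sub_one_of_pos (show (0 : ℝ) < s / 90 by positivity)
    rw [log_div (by positivity) (by positivity)] at htangent
    rw [← hs2, log_pow]
    push_cast
    linarith
  have hlog_succ : log (2 * n + 1) ≤ 8 + s / 45 := by
    have : log (2 * n + 1) ≤ log (2 * (2 * n)) := log_le_log (by positivity) (by linarith)
    rw [log_mul (by norm_num) (by positivity)] at this
    linarith [log_two_lt_d9]
  have hsL : s * log (2 * n) ≤ s * (7 + s / 45) := by gcongr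
  have htheta := Chebyshev.theta_ge (2 * n)
  push_cast at htheta
  rw [← hs] at htheta
  nlinarith [log_two_gt_d9]

theorem theta_sub_theta_le {n m : ℕ} (hm : 0 < m) (hmn : 2 * m ≤ n) :
    Chebyshev.theta (2 * n) - Chebyshev.theta (n / m) ≤
      #{p ∈ oddPrimesBelow (2 * n) | n < m * p} * log (2 * n) := by
  have hfloor : ⌊(n : ℝ) / m⌋₊ = n / m := Nat.floor_div_eq_div n m
  have hfloor2 : ⌊(2 * n : ℝ)⌋₊ = 2 * n := by exact_mod_cast Nat.floor_natCast (2 * n)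
  have hsub : Nat.primesLE (n / m) ⊆ Nat.primesLE (2 * n) := fun p hp ↦ by
    rw [Nat.mem_primesLE] at *
    exact ⟨hp.1.trans ((Nat.div_le_self n m).trans (by omega)), hp.2⟩
  rw [Chebyshev.theta_eq_sum_primesLE, Chebyshev.theta_eq_sum_primesLE, hfloor, hfloor2,
    ← sum_sdiff_eq_sub hsub, ← nsmul_eq_mul]
  have hodd : Nat.primesLE (2 * n) \ Nat.primesLE (n / m) ⊆
      {p ∈ oddPrimesBelow (2 * n) | n < m * p} := fun p hp ↦ by
    simp only [mem_sdiff, Nat.mem_primesLE, not_and', mem_filter, mem_oddPrimesBelow, not_le]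
      at hp ⊢
    obtain ⟨⟨hp2n, hprime⟩, hlarge⟩ := hp
    have hnp := (Nat.div_lt_iff_lt_mul hm).1 (hlarge hprime)
    have hp2 : p ≠ 2 := by rintro rfl; omega
    have := hprime.eq_two_or_odd
    exact ⟨⟨hprime, hp2, by omega⟩, by rwa [mul_comm]⟩
  calc _ ≤ #(Nat.primesLE (2 * n) \ Nat.primesLE (n / m)) • log (2 * n) := by
        refine sum_le_card_nsmul _ _ _ fun p hp ↦ ?_
        rw [mem_sdiff, Nat.mem_primesLE] at hp
        exact log_le_log (mod_cast hp.1.2.pos) (mod_cast hp.1.1)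
    _ ≤ _ := nsmul_le_nsmul_left (log_nonneg (by norm_cast; omega)) (card_le_card hodd)

theorem HallViolator.two_lt_card_right {n a : ℕ} {X Y : Finset ℕ} (hV : HallViolator n a X Y) :
    2 < #Y := by
  have hlt := hV.card_primes_lt
  by_contra! hY
  have hY2 : #Y - 1 = 1 := by omega
  obtain ⟨p, hp, hnp, hp2n⟩ := Nat.exists_prime_lt_and_le_two_mul n hV.pos.ne'
  have hodd := hp.eq_two_or_odd
  have hYn := hV.card_right_le
  have hmem : p ∈ {p ∈ oddPrimesBelow (2 * n) | n < (#Y - 1) * p} :=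
    mem_filter.2 ⟨mem_oddPrimesBelow.2 ⟨hp, by omega, by omega⟩, by rwa [hY2, one_mul]⟩
  have := card_pos.2 ⟨p, hmem⟩
  omega

theorem HallViolator.mul_le_card_right_mul_log {n a : ℕ} {X Y : Finset ℕ}
    (hV : HallViolator n a X Y) (hn : 4096 ≤ n) : 0.95 * n ≤ #Y * log (2 * n) := by
  have hn' : (4096 : ℝ) ≤ n := mod_cast hn
  have hL := log_two_mul_le hn
  have hL9 := nine_le_log_two_mul hn
  set L := log (2 * n)
  obtain ⟨m, hm⟩ : ∃ m, #Y = m + 1 := ⟨#Y - 1, by have := hV.two_lt_card_right; omega⟩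
  have hm2 : 2 ≤ m := by have := hV.two_lt_card_right; omega
  have hm2' : (2 : ℝ) ≤ m := mod_cast hm2
  have hYL : m * L ≤ #Y * L := by gcongr; omega
  refine le_trans ?_ hYL
  obtain hmn | hmn := lt_or_ge n (2 * m)
  · have hmn' : (n : ℝ) < 2 * m := mod_cast hmn
    nlinarith
  have hcard : (#{p ∈ oddPrimesBelow (2 * n) | n < m * p} : ℝ) ≤ m := by
    have := hV.card_primes_lt
    rw [hm, Nat.add_sub_cancel] at this
    exact mod_cast (by omega : #{p ∈ oddPrimesBelow (2 * n) | n < m * p} ≤ m)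
  have hlog4 : log 4 ≤ 1.3863 := by
    rw [show (4 : ℝ) = 2 ^ 2 by norm_num, log_pow]
    push_cast
    linarith [log_two_lt_d9]
  have hchebyshev : 0.97 * n - 1.3863 * (n / m) ≤ m * L := by
    have hle := theta_sub_theta_le (by omega) hmn
    have hupper := Chebyshev.theta_le_log4_mul_x (x := n / m) (by positivity)
    have : log 4 * (n / m) ≤ 1.3863 * (n / m) := by gcongr
    have : #{p ∈ oddPrimesBelow (2 * n) | n < m * p} * L ≤ m * L := by gcongr
    linarith [mul_le_theta_two_mul hn]
  have hcrude : (n : ℝ) / m ≤ 3.7 * L := by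
    have : (n : ℝ) / m ≤ n / 2 := by gcongr
    rw [div_le_iff₀ (by positivity)]
    nlinarith
  linarith

theorem pow_mul_exp_le_exp {x c : ℝ} (hc : c ≤ x) {k : ℕ} (hk : k ≠ 0) :
    (2.718 * ((x - c) / k)) ^ k * exp c ≤ exp x := by
  have hy : 0 ≤ (x - c) / k := div_nonneg (sub_nonneg.2 hc) k.cast_nonneg
  calc (2.718 * ((x - c) / k)) ^ k * exp c ≤ exp ((x - c) / k) ^ k * exp c := by
        gcongr
        exact (mul_le_mul_of_nonneg_right (by linarith [exp_one_gt_d9]) hy).trans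
          exp_one_mul_le_exp
    _ = exp x := by
        rw [← exp_nat_mul, ← exp_add, mul_div_cancel₀ _ (by positivity), sub_add_cancel]

theorem two_pow_le_exp {k : ℕ} {x : ℝ} (h : k ≤ x) : (2 : ℝ) ^ k ≤ exp (0.6932 * x) := by
  rw [← exp_log (two_pos : (0 : ℝ) < 2), ← exp_nat_mul, exp_le_exp]
  nlinarith [log_two_lt_d9, log_two_gt_d9, k.cast_nonneg (α := ℝ)]

theorem one_div_density_le {h : ℕ} (hh : 1 ≤ h) :
    1 / density (oddPrimesBelow (2 * h)) ≤ √(2 * h - 1) := by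
  have hd := density_pos (P := oddPrimesBelow (2 * h)) fun p hp ↦ (mem_oddPrimesBelow.1 hp).1
  refine le_sqrt_of_sq_le ?_
  rw [div_pow, one_pow, div_le_iff₀ (by positivity), mul_comm]
  exact one_le_density_sq_mul hh

theorem card_le_log_div_two {n s : ℕ} (hs : s ≠ 0) (hsn : s ≤ 2 * n) {T : Finset ℕ}
    (hT : T ⊆ s.primeFactors) (hlarge : ∀ p ∈ T, 9 ≤ p) : (#T : ℝ) ≤ log (2 * n) / 2 := by
  have h9 : 2 ≤ log 9 := by
    rw [le_log_iff_exp_le (by norm_num), show (2 : ℝ) = (2 : ℕ) * 1 by norm_num, exp_nat_mul]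
    nlinarith [exp_one_lt_d9, exp_pos 1]
  have hprod : 9 ^ #T ≤ 2 * n := calc
    9 ^ #T ≤ ∏ p ∈ T, p := pow_card_le_prod _ _ _ hlarge
    _ ≤ ∏ p ∈ s.primeFactors, p := prod_le_prod_of_subset_of_one_le' hT fun p hp _ ↦
      (Nat.prime_of_mem_primeFactors hp).one_le
    _ ≤ s := Nat.le_of_dvd (Nat.pos_of_ne_zero hs) s.prod_primeFactors_dvd
    _ ≤ 2 * n := hsn
  have hlog : log (9 ^ #T) ≤ log (2 * n) := log_le_log (by positivity) (mod_cast hprod)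
  rw [log_pow] at hlog
  nlinarith

/-! ### The size of a Hall violator -/

theorem HallViolator.density_mul_lt_card_left {n a h : ℕ} {X Y : Finset ℕ}
    (hV : HallViolator n a X Y) (hh : 5 ≤ h) :
    density (oddPrimesBelow (2 * h)) * n * (1 - log (2 * n) / 2 / (2 * h)) -
      2 ^ #(oddPrimesBelow (2 * h)) * (1 + log (2 * n) / 2) < #X := by
  obtain ⟨i, hi⟩ := hV.left_nonempty
  have hin := mem_range.1 (hV.left_subset hi)
  set P := oddPrimesBelow (2 * h) with hPdef
  have hP : ∀ p ∈ P, p.Prime ∧ p ≠ 2 := fun p hp ↦ by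
    rw [mem_oddPrimesBelow] at hp; exact ⟨hp.1, hp.2.1⟩
  have hd := density_pos fun p hp ↦ (hP p hp).1
  set T := (2 * i + 1).primeFactors \ P
  have hlarge : ∀ p ∈ T, 2 * h ≤ p := fun p hp ↦ by
    rw [mem_sdiff, Nat.mem_primeFactors, hPdef, mem_oddPrimesBelow] at hp
    have hp2 : p ≠ 2 := by rintro rfl; omega
    by_contra! hlt
    exact hp.2 ⟨hp.1.1, hp2, hlt⟩
  have hT : (#T : ℝ) ≤ log (2 * n) / 2 := card_le_log_div_two (by omega) (by omega) sdiff_subset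
    fun p hp ↦ le_trans (by omega) (hlarge p hp)
  have hsum : ∑ p ∈ T, (density P * n / p + 2 ^ #P) ≤
      log (2 * n) / 2 * (density P * n / (2 * h) + 2 ^ #P) := calc
    _ ≤ #T • (density P * n / (2 * h) + 2 ^ #P : ℝ) := by
      refine sum_le_card_nsmul _ _ _ fun p hp ↦ ?_
      have : (2 * h : ℝ) ≤ p := mod_cast hlarge p hp
      gcongr
    _ ≤ _ := by rw [nsmul_eq_mul]; gcongr
  calc _ = density P * n - 2 ^ #P - log (2 * n) / 2 * (density P * n / (2 * h) + 2 ^ #P) := by ring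
    _ ≤ density P * n - 2 ^ #P - ∑ p ∈ T, (density P * n / p + 2 ^ #P) := by gcongr
    _ ≤ _ := density_mul_le_card_coprime hP (odd_two_mul_add_one i) a n
    _ < #X := mod_cast hV.card_coprime_lt hi

theorem two_pow_mul_log_le {n k : ℕ} (hn : 4096 ≤ n) (hk : k ≤ log (2 * n) / 2 - 1) :
    2 ^ k * (1 + log (2 * n) / 2) * log (2 * n) ≤ 0.4 * n := by
  have hL9 := nine_le_log_two_mul hn
  have hexp : exp (log (2 * n)) = 2 * n := exp_log (by positivity)
  set L := log (2 * n)
  set c := 0.6932 * (L / 2 - 1)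
  set w := 2.718 * ((L - c) / (6 : ℕ))
  have hw : w ^ 6 * exp c ≤ 2 * n := hexp ▸ pow_mul_exp_le_exp (by unfold c; linarith) (by norm_num)
  have hw1 : 0.29 * L ≤ w := by unfold w c; push_cast; linarith
  have hw6 : (1 + L / 2) * L ≤ 0.2 * w ^ 6 := by
    have hw4 : 2.61 ^ 4 ≤ w ^ 4 := by gcongr; linarith
    have hw2 : (0.29 * L) ^ 2 ≤ w ^ 2 := by gcongr
    nlinarith
  calc 2 ^ k * (1 + L / 2) * L = 2 ^ k * ((1 + L / 2) * L) := mul_assoc _ _ _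
    _ ≤ exp c * (0.2 * w ^ 6) := by gcongr; exact two_pow_le_exp hk
    _ ≤ 0.4 * n := by linarith

theorem HallViolator.le_card_left_mul_log {n a : ℕ} {X Y : Finset ℕ}
    (hV : HallViolator n a X Y) (hn : 4096 ≤ n) : n ≤ #X * log (2 * n) := by
  have hL9 := nine_le_log_two_mul hn
  set L := log (2 * n)
  set h := ⌈L / 2⌉₊
  have hh : L / 2 ≤ h := Nat.le_ceil _
  have hh' : (h : ℝ) < L / 2 + 1 := Nat.ceil_lt_add_one (by positivity)
  have hh5 : 5 ≤ h := by
    have : (4 : ℝ) < h := by linarith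
    exact_mod_cast this
  have hlt := hV.density_mul_lt_card_left hh5
  set P := oddPrimesBelow (2 * h)
  have hd : 0 < density P := density_pos fun p hp ↦ (mem_oddPrimesBelow.1 hp).1
  have hdens : 2.8 ≤ density P * L := by
    have := one_le_density_sq_mul (h := h) (by omega)
    have : 1 ≤ density P ^ 2 * (L + 1) := this.trans (by gcongr; linarith)
    refine le_of_sq_le_sq ?_ (by positivity)
    rw [mul_pow]
    nlinarith
  have herror : 2 ^ #P * (1 + L / 2) * L ≤ 0.4 * n := two_pow_mul_log_le hn <| by
    have hP2 : #P ≤ h - 2 := card_oddPrimesBelow_le hh5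
    have : (#P + 2 : ℝ) ≤ h := mod_cast (by omega)
    linarith
  have hhalf : 1 / 2 ≤ 1 - L / 2 / (2 * h) := by
    have : L / 2 / (2 * h) ≤ 1 / 2 := by rw [div_le_iff₀ (by positivity)]; linarith
    linarith
  have hmain : density P * n * (1 / 2) ≤ density P * n * (1 - L / 2 / (2 * h)) := by gcongr
  nlinarith

/-- The common relative size of two subsets of `range n`, capped at `1 / 2`. The cap ensures that,
for a Hall violator, one of the sets has at least this relative size and the complement of the other
one at most this relative size. -/
noncomputable def relSize (n : ℕ) (X Y : Finset ℕ) : ℝ := min (min (#X / n) (#Y / n)) (1 / 2)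

theorem sum_div_add_one_mul_le {d E : ℝ} (hd : 0 ≤ d) (hE : 0 ≤ E) {h n : ℕ} (hh : 1 ≤ h)
    (hn : 1 ≤ n) :
    ∑ p ∈ oddPrimesBelow (2 * n) \ oddPrimesBelow (2 * h), ((n : ℝ) / p + 1) * (d * n / p + E) ≤
      d * n ^ 2 * ∑ p ∈ oddPrimesBelow (2 * n) \ oddPrimesBelow (2 * h), 1 / (p : ℝ) ^ 2 +
        ((d + E) * (log n / 2) + E) * n := by
  set Q := oddPrimesBelow (2 * n) \ oddPrimesBelow (2 * h)
  have hinv : ∑ p ∈ Q, 1 / (p : ℝ) ≤ log n / 2 := sum_inv_oddPrimesBelow_sdiff_le hh hn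
  have hcard : (#Q : ℝ) ≤ n := mod_cast card_oddPrimesBelow_sdiff_le h n
  calc ∑ p ∈ Q, ((n : ℝ) / p + 1) * (d * n / p + E)
      = d * n ^ 2 * ∑ p ∈ Q, 1 / (p : ℝ) ^ 2 + ((d + E) * n * ∑ p ∈ Q, 1 / (p : ℝ) + E * #Q) := by
        rw [mul_sum, mul_sum, ← nsmul_eq_mul' E, ← sum_const, ← sum_add_distrib, ← sum_add_distrib]
        exact sum_congr rfl fun p _ ↦ by ring
    _ ≤ d * n ^ 2 * ∑ p ∈ Q, 1 / (p : ℝ) ^ 2 + ((d + E) * n * (log n / 2) + E * n) := by gcongr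
    _ = _ := by ring

namespace HallViolator

variable {n a : ℕ} {X Y : Finset ℕ} (hV : HallViolator n a X Y)
include hV

theorem relSize_mul_le_sum {P : Finset ℕ} (hP : ∀ p ∈ P, p.Prime ∧ p ≠ 2) :
    relSize n X Y * n * (density P * n - 2 ^ #P - relSize n X Y * n) ≤
      ∑ p ∈ oddPrimesBelow (2 * n) \ P, ((n : ℝ) / p + 1) * (density P * n / p + 2 ^ #P) := by
  have hn : (0 : ℝ) < n := mod_cast hV.pos
  have hd := density_pos fun p hp ↦ (hP p hp).1
  have hXY : (n : ℝ) < #X + #Y := mod_cast hV.lt_card_add_card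
  have hright := card_mul_le_sum_of_common_prime hP hV.left_subset hV.right_subset
    fun i hi j hj ↦ hV.exists_common_prime hi hj
  have hleft := card_mul_le_sum_of_common_prime hP hV.right_subset hV.left_subset
    fun j hj i hi ↦ let ⟨p, hp, hpi, hpj⟩ := hV.exists_common_prime hi hj; ⟨p, hp, hpj, hpi⟩
  set B := ∑ p ∈ oddPrimesBelow (2 * n) \ P, ((n : ℝ) / p + 1) * (density P * n / p + 2 ^ #P)
  set μ := relSize n X Y * n with hμ
  have hcases : μ ≤ #X ∧ n - #Y ≤ μ ∨ μ ≤ #Y ∧ n - #X ≤ μ := by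
    rw [relSize, min_mul_of_nonneg _ _ hn.le, min_mul_of_nonneg _ _ hn.le,
      div_mul_cancel₀ _ hn.ne', div_mul_cancel₀ _ hn.ne'] at hμ
    grind
  obtain hneg | hpos := le_total (density P * n - 2 ^ #P - μ) 0
  · exact (mul_nonpos_of_nonneg_of_nonpos (by unfold μ relSize; positivity) hneg).trans
      (by positivity)
  obtain ⟨h1, h2⟩ | ⟨h1, h2⟩ := hcases
  · exact (mul_le_mul h1 (by linarith) hpos (by positivity)).trans hright
  · exact (mul_le_mul h1 (by linarith) hpos (by positivity)).trans hleft

theorem relSize_mul_le {h : ℕ} (hh : 1 ≤ h) {s : ℝ}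
    (hs : ∑ p ∈ oddPrimesBelow (2 * n) \ oddPrimesBelow (2 * h), 1 / (p : ℝ) ^ 2 ≤ s) :
    relSize n X Y * (1 - relSize n X Y / density (oddPrimesBelow (2 * h))) * n ≤
      s * n + (log n / 2 + 2 ^ #(oddPrimesBelow (2 * h)) / density (oddPrimesBelow (2 * h)) *
        (log n / 2 + 3 / 2)) := by
  have hn : (0 : ℝ) < n := mod_cast hV.pos
  set P := oddPrimesBelow (2 * h)
  have hP : ∀ p ∈ P, p.Prime ∧ p ≠ 2 := fun p hp ↦ by
    rw [mem_oddPrimesBelow] at hp; exact ⟨hp.1, hp.2.1⟩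
  have hd := density_pos fun p hp ↦ (hP p hp).1
  have hle := (hV.relSize_mul_le_sum hP).trans
    (sum_div_add_one_mul_le hd.le (by positivity) hh hV.pos)
  have hκ : relSize n X Y ≤ 1 / 2 := min_le_right _ _
  set κ := relSize n X Y
  set d := density P
  set E : ℝ := 2 ^ #P
  refine le_of_mul_le_mul_left ?_ (mul_pos hd hn)
  calc d * n * (κ * (1 - κ / d) * n) = κ * n * (d * n - E - κ * n) + κ * E * n := by
        field_simp; ring
    _ ≤ d * n ^ 2 * s + ((d + E) * (log n / 2) + E) * n + 1 / 2 * E * n := by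
        refine add_le_add (hle.trans ?_) (by gcongr)
        gcongr
    _ = _ := by field_simp; ring

theorem le_relSize_mul_log (hn : 4096 ≤ n) : 0.95 ≤ relSize n X Y * log (2 * n) := by
  have hL9 := nine_le_log_two_mul hn
  have hn0 : (0 : ℝ) < n := mod_cast hV.pos
  rw [relSize, min_mul_of_nonneg _ _ (by positivity), min_mul_of_nonneg _ _ (by positivity)]
  refine le_min (le_min ?_ ?_) (by linarith)
  · rw [div_mul_eq_mul_div, le_div_iff₀ hn0]
    linarith [hV.le_card_left_mul_log hn]
  · rw [div_mul_eq_mul_div, le_div_iff₀ hn0]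
    exact hV.mul_le_card_right_mul_log hn

theorem relSize_lt_one_div_four (hn : 4096 ≤ n) : relSize n X Y < 1 / 4 := by
  by_contra! hκ
  have hn' : (4096 : ℝ) ≤ n := mod_cast hn
  have hκ2 : relSize n X Y ≤ 1 / 2 := min_le_right _ _
  have hlog := log_two_mul_le hn
  rw [log_mul two_ne_zero (by positivity)] at hlog
  have hsum := sum_inv_sq_oddPrimesBelow_sdiff_le_add 2 (m := 7) (by norm_num) n
  rw [show oddPrimesBelow (2 * 7) \ oddPrimesBelow (2 * 2) = {5, 7, 11, 13} by decide] at hsum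
  have hle := hV.relSize_mul_le (by norm_num) hsum
  rw [show oddPrimesBelow (2 * 2) = {3} by decide] at hle
  norm_num [density] at hle
  have hparabola : 1 / 8 ≤ relSize n X Y * (1 - relSize n X Y / (2 / 3)) := by nlinarith
  nlinarith [log_two_gt_d9]

theorem relSize_lt_three_div_forty (hn : 4096 ≤ n) : relSize n X Y < 3 / 40 := by
  by_contra! hκ
  have hn' : (4096 : ℝ) ≤ n := mod_cast hn
  have hκ4 := hV.relSize_lt_one_div_four hn
  have hlog := log_two_mul_le hn
  rw [log_mul two_ne_zero (by positivity)] at hlog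
  have hsum := sum_inv_sq_oddPrimesBelow_sdiff_le_add 4 (m := 25) (by norm_num) n
  rw [show oddPrimesBelow (2 * 25) \ oddPrimesBelow (2 * 4) =
    {11, 13, 17, 19, 23, 29, 31, 37, 41, 43, 47} by decide] at hsum
  have hle := hV.relSize_mul_le (by norm_num) hsum
  rw [show oddPrimesBelow (2 * 4) = {3, 5, 7} by decide] at hle
  norm_num [density] at hle
  have hparabola : 0.0626 ≤ relSize n X Y * (1 - relSize n X Y / (16 / 35)) := by nlinarith
  nlinarith [log_two_gt_d9]

end HallViolator

theorem two_pow_mul_log_cubed_le {n k : ℕ} (hL : 12.66 ≤ log (2 * n))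
    (hk : k ≤ 0.4211 * log (2 * n) - 1) : 2 ^ k * log (2 * n) ^ 3 ≤ 0.385 * n := by
  have hn : (0 : ℝ) < n := Nat.cast_pos.2 <| Nat.pos_of_ne_zero <| by rintro rfl; norm_num at hL
  have hexp : exp (log (2 * n)) = 2 * n := exp_log (by positivity)
  set L := log (2 * n)
  set c := 0.6932 * (0.4211 * L - 1)
  set w := 2.718 * ((L - c) / (8 : ℕ))
  have hw : w ^ 8 * exp c ≤ 2 * n := hexp ▸ pow_mul_exp_le_exp (by unfold c; linarith) (by norm_num)
  have hw1 : 0.2405 * L + 0.235 ≤ w := by unfold w c; push_cast; linarith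
  have hw0 : 0 ≤ w := by linarith
  have hw8 : 5.2 * L ^ 3 ≤ w ^ 8 := calc
    5.2 * L ^ 3 ≤ 3.27 ^ 5 * (0.2405 * L) ^ 3 := by rw [mul_pow, ← mul_assoc]; gcongr; norm_num
    _ ≤ w ^ 5 * w ^ 3 := by gcongr <;> linarith
    _ = w ^ 8 := by ring
  calc 2 ^ k * L ^ 3 ≤ exp c * (0.1925 * w ^ 8) := by
        gcongr; exacts [two_pow_le_exp hk, by linarith [pow_nonneg hw0 8]]
    _ ≤ (0.385 * n : ℝ) := by linarith

theorem mul_sieve_error_le {n h : ℕ} (hL : 12.66 ≤ log (2 * n)) (hh : 5 ≤ h)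
    (hhL : h ≤ 0.4211 * log (2 * n) + 1) :
    h * (log n / 2 + 2 ^ #(oddPrimesBelow (2 * h)) / density (oddPrimesBelow (2 * h)) *
      (log n / 2 + 3 / 2)) ≤ 0.04 * n := by
  have hn : (n : ℝ) ≠ 0 := by rintro h; norm_num [h] at hL
  have hlogn : log n = log (2 * n) - log 2 := by rw [log_mul two_ne_zero hn]; ring
  have hlog2 := log_two_gt_d9
  have hd : 0 < density (oddPrimesBelow (2 * h)) :=
    density_pos fun p hp ↦ (mem_oddPrimesBelow.1 hp).1
  have hh5 : (5 : ℝ) ≤ h := mod_cast hh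
  have hinv : 1 / density (oddPrimesBelow (2 * h)) ≤ 0.273 * log (2 * n) := calc
    _ ≤ √(2 * h - 1) := one_div_density_le (by omega)
    _ ≤ (h + 4) / 3 := by rw [sqrt_le_iff]; constructor <;> nlinarith [sq_nonneg (h - 5 : ℝ)]
    _ ≤ 0.273 * log (2 * n) := by linarith
  have hpow : 2 ^ #(oddPrimesBelow (2 * h)) * log (2 * n) ^ 3 ≤ 0.385 * n :=
    two_pow_mul_log_cubed_le hL <| by
      have := card_oddPrimesBelow_le hh
      have : (#(oddPrimesBelow (2 * h)) + 2 : ℝ) ≤ h := mod_cast (by omega)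
      linarith
  set L := log (2 * n)
  set P := oddPrimesBelow (2 * h)
  have hsq : 12.66 * L ^ 2 ≤ 2 ^ #P * L ^ 3 := calc
    12.66 * L ^ 2 ≤ L * L ^ 2 := by gcongr
    _ = 1 * L ^ 3 := by ring
    _ ≤ 2 ^ #P * L ^ 3 := by gcongr; exact one_le_pow₀ one_le_two
  calc h * (log n / 2 + 2 ^ #P / density P * (log n / 2 + 3 / 2))
      = h * (log n / 2 + 2 ^ #P * (1 / density P) * (log n / 2 + 3 / 2)) := by ring
    _ ≤ 0.501 * L * (0.5 * L + 2 ^ #P * (0.273 * L) * (0.592 * L)) := by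
      gcongr <;> linarith
    _ ≤ 0.04 * n := by linarith

theorem div_density_le {h : ℕ} (hh : 1 ≤ h) {κ : ℝ} (hκ0 : 0 ≤ κ) (hκ : κ ≤ 3 / 40)
    (hhκ : h * κ ≤ 0.475) : κ / density (oddPrimesBelow (2 * h)) ≤ 0.27 := calc
  _ = κ * (1 / density (oddPrimesBelow (2 * h))) := by ring
  _ ≤ κ * √(2 * h - 1) := by gcongr; exact one_div_density_le hh
  _ = √(κ ^ 2 * (2 * h - 1)) := by rw [sqrt_mul (by positivity), sqrt_sq hκ0]
  _ ≤ 0.27 := sqrt_le_iff.2 ⟨by norm_num, by nlinarith⟩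

theorem not_hallViolator_of_le {n a : ℕ} {X Y : Finset ℕ} (hn : 4096 ≤ n) :
    ¬ HallViolator n a X Y := by
  intro hV
  have hn0 : (0 : ℝ) < n := mod_cast hV.pos
  have hκL := hV.le_relSize_mul_log hn
  have hκ := hV.relSize_lt_three_div_forty hn
  have hL9 := nine_le_log_two_mul hn
  have hle (h : ℕ) (hh : 1 ≤ h) := hV.relSize_mul_le hh (sum_inv_sq_oddPrimesBelow_sdiff_le hh n)
  set κ := relSize n X Y
  set L := log (2 * n)
  have hκ0 : 0 < κ := by by_contra!; nlinarith
  have hL : 12.66 ≤ L := by nlinarith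
  -- The bound `κ * (1 - κ / d) ≤ 1 / (4 * h) + error` fails once `h * κ` is well above `1 / 4`,
  -- while too large an `h` would spoil `κ / d` and the sieve error.
  set h := ⌈0.4 / κ⌉₊
  have hh : 0.4 / κ ≤ h := Nat.le_ceil _
  have hh' : (h : ℝ) < 0.4 / κ + 1 := Nat.ceil_lt_add_one (by positivity)
  have hκinv : 0.4 / κ ≤ 0.4211 * L := by rw [div_le_iff₀ hκ0]; linarith
  have hκinv' : 5 ≤ 0.4 / κ := by rw [le_div_iff₀ hκ0]; linarith
  have hh5 : 5 ≤ h := by exact_mod_cast hκinv'.trans hh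
  have hh0 : (0 : ℝ) < h := by positivity
  have hu : 0.4 ≤ h * κ := (div_le_iff₀ hκ0).1 hh
  have hu' : h * κ ≤ 0.475 := by
    have : (h - 1) * κ ≤ 0.4 := by rw [← le_div_iff₀ hκ0]; linarith
    linarith
  have herror := mul_sieve_error_le hL hh5 (by linarith)
  have hdensity : κ / density (oddPrimesBelow (2 * h)) ≤ 0.27 :=
    div_density_le (by omega) hκ0.le hκ.le hu'
  have hmain := mul_le_mul_of_nonneg_left (hle h (by omega)) hh0.le
  have hlower : 0.292 * n ≤ h * (κ * (1 - κ / density (oddPrimesBelow (2 * h))) * n) := calc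
    (0.292 * n : ℝ) ≤ 0.4 * (1 - 0.27) * n := by linarith
    _ ≤ (h * κ) * (1 - κ / density (oddPrimesBelow (2 * h))) * n := by gcongr
    _ = _ := by ring
  have hupper : h * (1 / (4 * h) * n) = (0.25 * n : ℝ) := by field_simp; norm_num
  linarith

theorem exists_injective_coprime (n a : ℕ) :
    ∃ σ : Fin n → Fin n, Function.Injective σ ∧
      ∀ i, Nat.Coprime (2 * i.val + 1) (a + 2 * (σ i).val) :=
  exists_injective_coprime_of_forall_not_hallViolator fun _ _ ↦
    (lt_or_ge n 4096).elim not_hallViolator_of_lt not_hallViolator_of_le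

end CoprimeMatching

section Caterpillar

variable {n t : ℕ}

/-- The position of a vertex of the caterpillar in an enumeration that starts with the spine
`v_0, …, v_{n-1}, w, u` and continues with the columns `x_{0,j}, …, x_{n-1,j}`, the column `j`
being permuted by `σ j`. -/
def caterpillarIndex (σ : Fin t → Fin n → Fin n) : Fin 2 ⊕ (Fin n ⊕ (Fin n × Fin t)) → ℕ :=
  Sum.elim ![n + 1, n] <| Sum.elim Fin.val fun x ↦ n + 2 + (finProdFinEquiv (x.2, σ x.2 x.1)).val

theorem caterpillarIndex_injective {σ : Fin t → Fin n → Fin n}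
    (hσ : ∀ j, Function.Injective (σ j)) : Function.Injective (caterpillarIndex σ) := by
  have hleaf : Function.Injective fun x : Fin n × Fin t ↦
      n + 2 + (finProdFinEquiv (x.2, σ x.2 x.1)).val := by
    rintro ⟨i, j⟩ ⟨i', j'⟩ h
    obtain ⟨hj, hi⟩ := Prod.mk.inj <| finProdFinEquiv.injective <| Fin.ext <|
      Nat.add_left_cancel h
    obtain rfl : j = j' := hj
    exact Prod.ext (hσ j hi) rfl
  refine .sumElim (by simp [Function.Injective, Fin.forall_fin_two])
    (Fin.val_injective.sumElim hleaf fun i x ↦ by omega) ?_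
  simp only [Sum.forall, Sum.elim_inl, Sum.elim_inr, Fin.forall_fin_two, Matrix.cons_val_zero,
    Matrix.cons_val_one]
  exact ⟨⟨fun i ↦ by omega, fun x ↦ by omega⟩, fun i ↦ by omega, fun x ↦ by omega⟩

theorem caterpillarIndex_lt (σ : Fin t → Fin n → Fin n)
    (v : Fin 2 ⊕ (Fin n ⊕ (Fin n × Fin t))) :
    caterpillarIndex σ v < Fintype.card (Fin 2 ⊕ (Fin n ⊕ (Fin n × Fin t))) := by
  simp only [Fintype.card_sum, Fintype.card_prod, Fintype.card_fin]
  obtain a | i | x := v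
  · fin_cases a <;> simp [caterpillarIndex] <;> omega
  · simp only [caterpillarIndex, Sum.elim_inr, Sum.elim_inl]; omega
  · have := (finProdFinEquiv (x.2, σ x.2 x.1)).isLt
    simp only [caterpillarIndex, Sum.elim_inr]
    linarith [mul_comm n t]

theorem coprime_two_mul_add_one_succ (k : ℕ) : Nat.Coprime (2 * k + 1) (2 * (k + 1) + 1) := by
  rw [show 2 * (k + 1) + 1 = 2 + (2 * k + 1) by ring, Nat.coprime_add_self_right]
  simp

theorem coprime_caterpillarIndex_of_adj {σ : Fin t → Fin n → Fin n}
    (hσ : ∀ j i, Nat.Coprime (2 * i.val + 1) (2 * (n + 2 + n * j) + 1 + 2 * (σ j i).val))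
    {x y : Fin 2 ⊕ (Fin n ⊕ (Fin n × Fin t))} (h : (tToedCaterpillar n t).Adj x y) :
    Nat.Coprime (2 * caterpillarIndex σ x + 1) (2 * caterpillarIndex σ y + 1) := by
  rw [tToedCaterpillar, SimpleGraph.fromRel_adj] at h
  obtain ⟨-, h⟩ := h
  wlog h' : _ generalizing x y
  · exact (this h.symm (h.resolve_left h')).symm
  rcases x with a | i | x <;> rcases y with b | i' | ⟨i', j⟩ <;> try exact h'.elim
  · obtain ⟨rfl, h0⟩ | ⟨rfl, hlast⟩ := h'
    · simp [caterpillarIndex, h0]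
    · have hi' : i'.val + 1 = n := by omega
      simpa [caterpillarIndex, hi'] using (coprime_two_mul_add_one_succ i').symm
  · simpa [caterpillarIndex, (h' : i'.val = i.val + 1)] using coprime_two_mul_add_one_succ i
  · obtain rfl : i = i' := h'
    have hindex : 2 * (n + 2 + (σ j i + n * j)) + 1 = 2 * (n + 2 + n * j) + 1 + 2 * σ j i := by
      ring
    simpa [caterpillarIndex, hindex] using hσ j i

end Caterpillar

/-- All `t`-toed caterpillars are odd prime, for every length `n ≥ 1` and every
number of toes `t ≥ 1`. -/
theorem tToedCaterpillar_oddPrime (n t : ℕ) (hn : 1 ≤ n) (ht : 1 ≤ t) :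
    IsOddPrime (tToedCaterpillar n t) := by
  choose σ hinj hcop using fun j : Fin t ↦
    CoprimeMatching.exists_injective_coprime n (2 * (n + 2 + n * j) + 1)
  refine ⟨fun v ↦ 2 * caterpillarIndex σ v + 1, fun v w h ↦ ?_, fun v ↦ ⟨?_, ?_⟩, fun v w h ↦ ?_⟩
  · exact caterpillarIndex_injective hinj (by simpa using h)
  · exact odd_two_mul_add_one _
  · have := caterpillarIndex_lt σ v
    dsimp only
    omega
  · exact coprime_caterpillarIndex_of_adj hcop h
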